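/- arXiv:2604.08067 — 3 statements merged into one kernel-verified Lean document; each statement's English description precedes it below -/
import Mathlib

section
/- Let D be a symmetric positive semidefinite real n×n matrix, let ξ, u ∈ ℝⁿ and t > 0, and define d = −Dξ and s = t·d. If −⟨d, u⟩ − ⟨ξ, s⟩ < 0, then ⟨u, Du − s⟩ > 0. -/
open scoped RealInnerProductSpace

theorem stmt_3 {n : ℕ} (D : Matrix (Fin n) (Fin n) ℝ) (hD : D.PosSemidef)
    (ξ u : EuclideanSpace ℝ (Fin n)) (t : ℝ) (ht : 0 < t)
    (d s : EuclideanSpace ℝ (Fin n))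
    (hd : d = -(Matrix.toEuclideanLin D ξ)) (hs : s = t • d)
    (hcond : -⟪d, u⟫ - ⟪ξ, s⟫ < 0) :
    0 < ⟪u, Matrix.toEuclideanLin D u - s⟫ := by
  have hP : (Matrix.toEuclideanLin D).IsPositive := Matrix.isPositive_toEuclideanLin_iff.mpr hD
  have hsym := hP.isSymmetric
  have h0 := hP.re_inner_nonneg_right (u + t • ξ)
  have h1 : ⟪ξ, Matrix.toEuclideanLin D u⟫ = ⟪u, Matrix.toEuclideanLin D ξ⟫ := by
    rw [← hsym ξ u, real_inner_comm]
  have h2 : ⟪Matrix.toEuclideanLin D ξ, u⟫ = ⟪u, Matrix.toEuclideanLin D ξ⟫ :=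
    real_inner_comm _ _
  subst hs hd
  simp only [map_add, map_smul, inner_add_left, inner_add_right, inner_smul_left,
    inner_smul_right, inner_neg_left, inner_neg_right, inner_sub_right, h1, h2,
    RCLike.re_to_real, conj_trivial] at h0 hcond ⊢
  nlinarith [mul_pos ht (neg_pos.mpr hcond)]
end

section
/- Let m ≤ k be positive integers, γ > 0, x ∈ ℝⁿ, and for each j = m, …, k let y_j ∈ ℝⁿ, ξ_j ∈ ℝⁿ and β_j ∈ ℝ satisfy β_j ≥ (γ/2)‖y_j − x‖², with y_m = x and β_m = 0. Suppose the aggregate sequences (ξ̃_i, β̃_i), i = m, …, k, satisfy ξ̃_m = ξ_m, β̃_m = 0, and for each i ∈ {m, …, k − 1} there exist λ₁ⁱ, λ₂ⁱ, λ₃ⁱ ≥ 0 with λ₁ⁱ + λ₂ⁱ + λ₃ⁱ = 1 such that ξ̃_{i+1} = λ₁ⁱ ξ_m + λ₂ⁱ ξ_{i+1} + λ₃ⁱ ξ̃_i and β̃_{i+1} = λ₂ⁱ β_{i+1} + λ₃ⁱ β̃_i. Then there exist numbers λ^{k,j} ≥ 0, j = m, …, k, with Σ_{j=m}^{k} λ^{k,j}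 = 1 such that ξ̃_k = Σ_{j=m}^{k} λ^{k,j} ξ_j, β̃_k = Σ_{j=m}^{k} λ^{k,j} β_j, and, setting σ̃_k = Σ_{j=m}^{k} λ^{k,j} ‖y_j − x‖, one has β̃_k ≥ (γ/2) σ̃_k². -/
open scoped RealInnerProductSpace

theorem stmt_4 {n : ℕ} (m k : ℕ) (hm : 1 ≤ m) (hmk : m ≤ k) (γ : ℝ) (hγ : 0 < γ)
    (x : EuclideanSpace ℝ (Fin n))
    (y ξ : ℕ → EuclideanSpace ℝ (Fin n)) (β : ℕ → ℝ)
    (hβ : ∀ j, m ≤ j → j ≤ k → γ / 2 * ‖y j - x‖ ^ 2 ≤ β j)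
    (hym : y m = x) (hβm : β m = 0)
    (ξt : ℕ → EuclideanSpace ℝ (Fin n)) (βt : ℕ → ℝ)
    (hξtm : ξt m = ξ m) (hβtm : βt m = 0)
    (hagg : ∀ i, m ≤ i → i < k →
      ∃ l₁ l₂ l₃ : ℝ, 0 ≤ l₁ ∧ 0 ≤ l₂ ∧ 0 ≤ l₃ ∧ l₁ + l₂ + l₃ = 1 ∧
        ξt (i + 1) = l₁ • ξ m + l₂ • ξ (i + 1) + l₃ • ξt i ∧
        βt (i + 1) = l₂ * β (i + 1) + l₃ * βt i) :
    ∃ lam : ℕ → ℝ,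
      (∀ j ∈ Finset.Icc m k, 0 ≤ lam j) ∧
      (∑ j ∈ Finset.Icc m k, lam j) = 1 ∧
      ξt k = ∑ j ∈ Finset.Icc m k, lam j • ξ j ∧
      βt k = ∑ j ∈ Finset.Icc m k, lam j * β j ∧
      γ / 2 * (∑ j ∈ Finset.Icc m k, lam j * ‖y j - x‖) ^ 2 ≤ βt k := by
  have key : ∀ i, m ≤ i → i ≤ k → ∃ lam : ℕ → ℝ,
      (∀ j ∈ Finset.Icc m k, 0 ≤ lam j) ∧
      (∑ j ∈ Finset.Icc m k, lam j) = 1 ∧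
      ξt i = ∑ j ∈ Finset.Icc m k, lam j • ξ j ∧
      βt i = ∑ j ∈ Finset.Icc m k, lam j * β j := by
    intro i hi
    induction i, hi using Nat.le_induction with
    | base =>
      intro _
      refine ⟨fun j => if j = m then 1 else 0, ?_, ?_, ?_, ?_⟩
      · intro j _
        dsimp only
        split_ifs <;> norm_num
      · simp [hmk]
      · simp [ite_smul, hmk, hξtm]
      · simp [ite_mul, hmk, hβtm, hβm]
    | succ i hi ih =>
      intro hik
      obtain ⟨lam, h0, h1, h2, h3⟩ := ih (by omega)
      obtain ⟨a, b, c, ha, hb, hc, habc, e1, e2⟩ := hagg i hi (by omega)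
      have hmi : m ≤ i + 1 := by omega
      refine ⟨fun j => (if j = m then a else 0) + (if j = i + 1 then b else 0) + c * lam j,
        ?_, ?_, ?_, ?_⟩
      · intro j hj
        have := mul_nonneg hc (h0 j hj)
        dsimp only
        split_ifs <;> linarith
      · simp [Finset.sum_add_distrib, ← Finset.mul_sum, h1, hmk, hmi, hik, habc]
      · rw [e1, h2]
        simp [add_smul, ite_smul, Finset.sum_add_distrib, mul_smul, ← Finset.smul_sum, hmk, hmi, hik]
      · rw [e2, h3]
        simp [add_mul, ite_mul, Finset.sum_add_distrib, mul_assoc, ← Finset.mul_sum, hmk, hmi, hik,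
          hβm]
  obtain ⟨lam, h0, h1, h2, h3⟩ := key k hmk le_rfl
  refine ⟨lam, h0, h1, h2, h3, ?_⟩
  have hsq : (∑ j ∈ Finset.Icc m k, lam j * ‖y j - x‖) ^ 2
      ≤ ∑ j ∈ Finset.Icc m k, lam j * ‖y j - x‖ ^ 2 :=
    Real.pow_arith_mean_le_arith_mean_pow _ _ _ h0 h1 (fun j _ => norm_nonneg _) 2
  calc _ ≤ γ / 2 * ∑ j ∈ Finset.Icc m k, lam j * ‖y j - x‖ ^ 2 := by gcongr
    _ = ∑ j ∈ Finset.Icc m k, lam j * (γ / 2 * ‖y j - x‖ ^ 2) := by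
      rw [Finset.mul_sum]
      exact Finset.sum_congr rfl fun j _ => by ring
    _ ≤ ∑ j ∈ Finset.Icc m k, lam j * β j := by
      refine Finset.sum_le_sum fun j hj => mul_le_mul_of_nonneg_left ?_ (h0 j hj)
      rw [Finset.mem_Icc] at hj
      exact hβ j hj.1 hj.2
    _ = βt k := h3.symm
end

section
/- Let p, g ∈ ℝⁿ and let w, α, β, M, c be real numbers with α ≥ 0, β ≥ 0, M > 0, c ∈ (0, 1/2), w = ‖p‖² + 2α, β + ⟨p, g⟩ ≤ c·w, and max{‖p‖, ‖g‖, √α} ≤ M. Define Q : [0,1] → ℝ by Q(λ) = ‖λg + (1 − λ)p‖² + 2(λβ + (1 − λ)α), and set b = (1 − 2c)/(4M). Then there exists λ ∈ [0,1] such that Q(λ) ≤ w − w²·b²; equivalently, min{Q(λ) : λ ∈ [0,1]} ≤ w − w²·b². -/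
open scoped RealInnerProductSpace

theorem stmt_7 {n : ℕ} (p g : EuclideanSpace ℝ (Fin n))
    (w α β M c : ℝ) (hα : 0 ≤ α) (hβ : 0 ≤ β) (hM : 0 < M)
    (hc : c ∈ Set.Ioo (0 : ℝ) (1 / 2))
    (hw : w = ‖p‖ ^ 2 + 2 * α)
    (hβg : β + ⟪p, g⟫ ≤ c * w)
    (hbound : max (max ‖p‖ ‖g‖) (Real.sqrt α) ≤ M)
    (Q : ℝ → ℝ)
    (hQ : ∀ lam, Q lam = ‖lam • g + (1 - lam) • p‖ ^ 2 + 2 * (lam * β + (1 - lam) * α))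
    (b : ℝ) (hb : b = (1 - 2 * c) / (4 * M)) :
    ∃ lam ∈ Set.Icc (0 : ℝ) 1, Q lam ≤ w - w ^ 2 * b ^ 2 := by
  obtain ⟨hc0, hc1⟩ := hc
  have hp : ‖p‖ ≤ M := le_trans (le_trans (le_max_left _ _) (le_max_left _ _)) hbound
  have hg : ‖g‖ ≤ M := le_trans (le_trans (le_max_right _ _) (le_max_left _ _)) hbound
  have ha : Real.sqrt α ≤ M := le_trans (le_max_right _ _) hbound
  have ha2 : α ≤ M ^ 2 := (Real.sqrt_le_left hM.le).1 ha
  have hp2 : ‖p‖ ^ 2 ≤ M ^ 2 := pow_le_pow_left₀ (norm_nonneg _) hp 2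
  have hw0 : 0 ≤ w := by rw [hw]; positivity
  have hw3 : w ≤ 3 * M ^ 2 := by linarith
  have hM2 : 0 < M ^ 2 := by positivity
  have hd : ‖g - p‖ ^ 2 ≤ 4 * M ^ 2 := by
    have h1 : ‖g - p‖ ≤ 2 * M := by linarith [norm_sub_le g p]
    have := pow_le_pow_left₀ (norm_nonneg _) h1 2
    linarith
  obtain ⟨l, hl⟩ : ∃ l, l = (1 - 2 * c) * w / (8 * M ^ 2) := ⟨_, rfl⟩
  have hl0 : 0 ≤ l := by
    rw [hl]; exact div_nonneg (mul_nonneg (by linarith) hw0) (by positivity)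
  have hl1 : l ≤ 1 := by
    rw [hl, div_le_one (by positivity)]
    nlinarith [mul_nonneg hc0.le hw0]
  refine ⟨l, ⟨hl0, hl1⟩, ?_⟩
  have hexp : ‖l • g + (1 - l) • p‖ ^ 2
      = ‖p‖ ^ 2 + 2 * l * (⟪p, g⟫ - ‖p‖ ^ 2) + l ^ 2 * ‖g - p‖ ^ 2 := by
    have e : l • g + (1 - l) • p = p + l • (g - p) := by module
    rw [e, norm_add_sq_real, inner_smul_right, inner_sub_right, real_inner_self_eq_norm_sq,
      norm_smul, mul_pow, Real.norm_eq_abs, sq_abs]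
    ring
  have hfin : w ^ 2 * b ^ 2 = l * ((1 - 2 * c) * w) - l ^ 2 * (4 * M ^ 2) := by
    rw [hb, hl]; field_simp; ring
  rw [hQ, hexp, hfin]
  have h1 := mul_le_mul_of_nonneg_left hd (sq_nonneg l)
  have h2 : l * (2 * (⟪p, g⟫ - ‖p‖ ^ 2 + β - α)) ≤ l * (-((1 - 2 * c) * w)) :=
    mul_le_mul_of_nonneg_left (by nlinarith [sq_nonneg ‖p‖]) hl0
  linarith
end
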